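/- For a terrain T with altitude line A at height h and any subset S ⊆ T, the strong visibility region of S on the altitude line, namely {p ∈ A : ∀ q ∈ S, p sees q}, is a convex subset of ℝ × ℝ. In particular, for each terrain edge e the set of points of A seeing all of e is an interval, whose left and right endpoints are the opening point and the closing point of e. -/

import Mathlib

open Set

/-- The terrain: union of the closed segments `[v i, v (i+1)]`, `i = 0, …, n-2`. -/
def terrain (n : ℕ) (hn : 2 ≤ n) (v : Fin n → ℝ × ℝ) : Set (ℝ × ℝ) :=
  ⋃ i : Fin (n - 1), segment ℝ (v (Fin.castLE (by omega) i)) (v (Fin.cast (by omega) i.succ))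

/-- A point `r` is on or above the terrain `T`. -/
def onAbove (T : Set (ℝ × ℝ)) (r : ℝ × ℝ) : Prop :=
  ∀ t ∈ T, t.1 = r.1 → t.2 ≤ r.2

/-- `p` sees `q` (w.r.t. terrain `T`): every point of the segment `[p,q]` is on or above `T`. -/
def seesT (T : Set (ℝ × ℝ)) (p q : ℝ × ℝ) : Prop :=
  ∀ x ∈ segment ℝ p q, onAbove T x

/-- The altitude line at height `h`: the segment from `((v 0).1, h)` to `((v (n-1)).1, h)`. -/
def altLine (n : ℕ) (hn : 2 ≤ n) (v : Fin n → ℝ × ℝ) (h : ℝ) : Set (ℝ × ℝ) :=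
  segment ℝ ((v ⟨0, by omega⟩).1, h) ((v ⟨n - 1, by omega⟩).1, h)

/-!
Let `p` lie between `p₁` and `p₂` on the altitude line, and let `q` be a point below the line. The
abscissa of `p` lies between those of `q` and one of the two, say `p₁`, so some point `m` of the
sight line from `p₁` to `q` has the same abscissa as `p` and is not above it. If `p₁` sees `q`, so
does `m`, and hence so does `p`: raising the viewpoint raises the whole sight line. When the
altitude line is replaced by the graph of a concave function, concavity is what keeps `m` below it.
-/

theorem onAbove.of_snd_le {T : Set (ℝ × ℝ)} {r r' : ℝ × ℝ} (hr : onAbove T r)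
    (hfst : r.1 = r'.1) (hsnd : r.2 ≤ r'.2) : onAbove T r' :=
  fun t ht htr' => (hr t ht (htr'.trans hfst.symm)).trans hsnd

namespace seesT

variable {T : Set (ℝ × ℝ)} {p p' p₁ p₂ q : ℝ × ℝ}

theorem of_snd_le (hp : seesT T p q) (hfst : p.1 = p'.1) (hsnd : p.2 ≤ p'.2) :
    seesT T p' q := by
  rintro _ ⟨s, t, hs, ht, hst, rfl⟩
  refine (hp _ ⟨s, t, hs, ht, hst, rfl⟩).of_snd_le ?_ ?_
  · simp [hfst]
  · simpa using mul_le_mul_of_nonneg_left hsnd hs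

theorem of_mem_segment (hp : seesT T p q) (hp' : p' ∈ segment ℝ p q) : seesT T p' q :=
  fun _ hx => hp _ ((convex_segment p q).segment_subset hp' (right_mem_segment ℝ p q) hx)

variable {f : ℝ → ℝ}

theorem of_fst_mem_segment (hf : ConcaveOn ℝ univ f) (hp : p.2 ≤ f p.1) (hp' : f p'.1 ≤ p'.2)
    (hq : q.2 ≤ f q.1) (hsees : seesT T p q) (hfst : p'.1 ∈ segment ℝ p.1 q.1) :
    seesT T p' q := by
  obtain ⟨s, t, hs, ht, hst, hfst⟩ := hfst
  have hm : seesT T (s • p + t • q) q := hsees.of_mem_segment ⟨s, t, hs, ht, hst, rfl⟩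
  refine hm.of_snd_le hfst ?_
  calc s * p.2 + t * q.2 ≤ s * f p.1 + t * f q.1 := by gcongr
    _ ≤ f (s • p.1 + t • q.1) := hf.2 (mem_univ _) (mem_univ _) hs ht hst
    _ ≤ p'.2 := hfst ▸ hp'

theorem of_fst_mem_segment_of_seesT (hf : ConcaveOn ℝ univ f) (hp₁ : p₁.2 ≤ f p₁.1)
    (hp₂ : p₂.2 ≤ f p₂.1) (hp : f p.1 ≤ p.2) (hq : q.2 ≤ f q.1) (hsees₁ : seesT T p₁ q)
    (hsees₂ : seesT T p₂ q) (hfst : p.1 ∈ segment ℝ p₁.1 p₂.1) : seesT T p q := by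
  have hcover : segment ℝ p₁.1 p₂.1 ⊆ segment ℝ p₁.1 q.1 ∪ segment ℝ p₂.1 q.1 := by
    simpa only [segment_eq_uIcc, uIcc_comm p₂.1] using uIcc_subset_uIcc_union_uIcc
  rcases hcover hfst with hfst₁ | hfst₂
  · exact of_fst_mem_segment hf hp₁ hp hq hsees₁ hfst₁
  · exact of_fst_mem_segment hf hp₂ hp hq hsees₂ hfst₂

end seesT

theorem terrain_subset_of_convex {n : ℕ} {hn : 2 ≤ n} {v : Fin n → ℝ × ℝ} {C : Set (ℝ × ℝ)}
    (hC : Convex ℝ C) (hv : ∀ i, v i ∈ C) : terrain n hn v ⊆ C :=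
  iUnion_subset fun _ => hC.segment_subset (hv _) (hv _)

theorem snd_eq_of_mem_altLine {n : ℕ} {hn : 2 ≤ n} {v : Fin n → ℝ × ℝ} {h : ℝ} {p : ℝ × ℝ}
    (hp : p ∈ altLine n hn v h) : p.2 = h := by
  simpa using (Prod.segment_subset _ _ hp).2

theorem stmt_7_general {T A S : Set (ℝ × ℝ)} {f : ℝ → ℝ} (hf : ConcaveOn ℝ univ f)
    (hA : Convex ℝ A) (hAf : ∀ p ∈ A, p.2 = f p.1) (hSf : ∀ q ∈ S, q.2 ≤ f q.1) :
    Convex ℝ {p ∈ A | ∀ q ∈ S, seesT T p q} := by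
  rw [convex_iff_segment_subset]
  rintro p₁ ⟨hp₁, hsees₁⟩ p₂ ⟨hp₂, hsees₂⟩ p hp
  have hpA : p ∈ A := hA.segment_subset hp₁ hp₂ hp
  refine ⟨hpA, fun q hq => ?_⟩
  exact .of_fst_mem_segment_of_seesT hf (hAf p₁ hp₁).le (hAf p₂ hp₂).le (hAf p hpA).ge (hSf q hq)
    (hsees₁ q hq) (hsees₂ q hq) (Prod.segment_subset _ _ hp).1

theorem stmt_7 (n : ℕ) (hn : 2 ≤ n) (v : Fin n → ℝ × ℝ)
    (hmono : ∀ i j : Fin n, i < j → (v i).1 < (v j).1)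
    (h : ℝ) (hh : ∀ i : Fin n, (v i).2 < h)
    (S : Set (ℝ × ℝ)) (hS : S ⊆ terrain n hn v) :
    Convex ℝ {p ∈ altLine n hn v h | ∀ q ∈ S, seesT (terrain n hn v) p q} := by
  have hbelow : terrain n hn v ⊆ univ ×ˢ Iic h :=
    terrain_subset_of_convex (convex_univ.prod (convex_Iic h)) fun i => ⟨mem_univ _, (hh i).le⟩
  exact stmt_7_general (concaveOn_const h convex_univ) (convex_segment _ _)
    (fun _ hp => snd_eq_of_mem_altLine hp) fun _ hq => (hbelow (hS hq)).2
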